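/- arXiv:2308.02817 — 2 statements merged into one kernel-verified Lean document; each statement's English description precedes it below -/
import Mathlib

section
/- With a(n) = f_n(A_n) the size of the even set-alternating domain, the limit as m → ∞ of a(2m) / (2 + 2√2)^m exists and equals √2 / 4. -/
/-- `σ` is in the set-alternating domain of `A` on alternatives `{1,…,n}`
(alternative `m` is represented by the index `m-1 : Fin n`; `σ x` is the rank
of alternative `x`, smaller rank = better). For every triple `i < j < k`:
if the middle alternative `j` (whose 1-based name is `j+1`) is in `A`, then
`i` is never ranked below both `j` and `k` (1N3); otherwise `k` is never
ranked above both `i` and `j` (3N1). -/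
def inSetAltDomain (n : ℕ) (A : Finset ℕ) (σ : Equiv.Perm (Fin n)) : Prop :=
  ∀ i j k : Fin n, i < j → j < k →
    (((j : ℕ) + 1 ∈ A) → ¬ (σ j < σ i ∧ σ k < σ i)) ∧
    (((j : ℕ) + 1 ∉ A) → ¬ (σ k < σ i ∧ σ k < σ j))

/-- The set-alternating domain `D_n(A)`. -/
def setAltDomain (n : ℕ) (A : Finset ℕ) : Set (Equiv.Perm (Fin n)) :=
  {σ | inSetAltDomain n A σ}

/-- `f_n(A)`, the cardinality of `D_n(A)`. -/
noncomputable def fsize (n : ℕ) (A : Finset ℕ) : ℕ := (setAltDomain n A).ncard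

/-- The even set-alternating scheme: even numbers `2 ≤ j ≤ n-2` (`n` even) or
`2 ≤ j ≤ n-1` (`n` odd). -/
def evenA (n : ℕ) : Finset ℕ :=
  if Even n then (Finset.Icc 2 (n-2)).filter (fun j => Even j)
  else (Finset.Icc 2 (n-1)).filter (fun j => Even j)

/-- `a(n) = f_n(A_n)`, the size of the even set-alternating domain. -/
noncomputable def aseq (n : ℕ) : ℕ := fsize n (evenA n)

/-- Admissible ordered triples of a ranking, listed from the bottom to the top. -/
def Adm (x y z : ℕ) : Prop :=
  ¬ (x < y ∧ y < z) ∧ ¬ (x < z ∧ z < y ∧ Even z) ∧ ¬ (y < x ∧ x < z ∧ ¬ Even x)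

/-- The `k` even numbers `2m, 2m-2, …` (truncated at `0`). -/
def desc : ℕ → ℕ → List ℕ
  | _, 0 => []
  | m, k + 1 => (2 * m) :: desc (m - 1) k

/-- `desc m k` followed by the odd number just below its last entry. -/
def descY : ℕ → ℕ → List ℕ
  | m, 0 => [2 * m + 1]
  | m, k + 1 => (2 * m) :: descY (m - 1) k

lemma desc_length (m k : ℕ) : (desc m k).length = k := by
  induction k generalizing m with
  | zero => rfl
  | succ k ih => simp [desc, ih]

lemma descY_length (m k : ℕ) : (descY m k).length = k + 1 := by
  induction k generalizing m with
  | zero => rfl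
  | succ k ih => simp [descY, ih]

lemma desc_bound (m k : ℕ) : ∀ x ∈ desc m k, x ≤ 2 * m ∧ Even x := by
  induction k generalizing m with
  | zero => simp [desc]
  | succ k ih =>
    intro x hx
    simp only [desc, List.mem_cons] at hx
    rcases hx with rfl | hx
    · simp
    · have := ih _ _ hx
      exact ⟨by omega, this.2⟩

lemma descY_bound (m k : ℕ) : ∀ x ∈ descY m k, x ≤ 2 * m + 1 := by
  induction k generalizing m with
  | zero => simp [descY]
  | succ k ih =>
    intro x hx
    simp only [descY, List.mem_cons] at hx
    rcases hx with rfl | hx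
    · simp
    · have := ih _ _ hx
      omega

lemma zero_mem_desc (m k : ℕ) (h : m < k) : 0 ∈ desc m k := by
  induction k generalizing m with
  | zero => omega
  | succ k ih =>
    simp only [desc, List.mem_cons]
    rcases Nat.eq_zero_or_pos m with rfl | hm
    · simp
    · right; exact ih _ (by omega)

lemma zero_mem_descY (m k : ℕ) (h : m < k) : 0 ∈ descY m k := by
  induction k generalizing m with
  | zero => omega
  | succ k ih =>
    simp only [descY, List.mem_cons]
    rcases Nat.eq_zero_or_pos m with rfl | hm
    · simp
    · right; exact ih _ (by omega)

lemma spec_core (T U : List ℕ) (m k : ℕ) (hk : T.length = k + 1)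
    (hnd : (T ++ U).Nodup) (hT : ∀ x ∈ T, 0 < x ∧ x ≤ 2 * m + 1)
    (hU : ∀ x ∈ U, Even x → x ≤ 2 * m)
    (he : ∀ e, 0 < e → e ≤ 2 * m → Even e → e ∈ T ∨ e ∈ U) :
    (T.Pairwise (fun i j => j < i ∧ Even i) ∧ ∀ i ∈ T, ∀ j ∈ U, ¬ (i < j ∧ Even j)) ↔
      (T = desc m (k + 1) ∨ T = descY m k) := by
  induction k generalizing T m with
  | zero =>
    obtain ⟨s, rfl⟩ := List.length_eq_one_iff.1 hk
    simp only [List.pairwise_singleton, true_and, List.mem_singleton, forall_eq, desc, descY,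
      List.cons.injEq, and_true] at *
    constructor
    · intro h
      by_contra hc
      have h2 : s < 2 * m := by omega
      rcases he (2 * m) (by omega) le_rfl (by simp) with h3 | h3
      · omega
      · exact h _ h3 ⟨h2, by simp⟩
    · rintro h j hj ⟨h1, h2⟩
      have := hU j hj h2
      omega
  | succ k ih =>
    obtain ⟨s, T', rfl⟩ := List.exists_cons_of_length_eq_add_one hk
    have hk' : T'.length = k + 1 := by simpa using hk
    obtain ⟨t, ht⟩ : ∃ t, t ∈ T' := List.exists_mem_of_length_pos (by omega)
    have hs := hT s (by simp)
    have hnd' : (T' ++ U).Nodup := by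
      rw [List.cons_append, List.nodup_cons] at hnd; exact hnd.2
    have hsn : s ∉ T' ∧ s ∉ U := by
      rw [List.cons_append, List.nodup_cons] at hnd; simpa using hnd.1
    have key : ∀ (_ : s = 2 * m) (_ : ∀ x ∈ T', x < 2 * m),
        (T'.Pairwise (fun i j => j < i ∧ Even i) ∧ ∀ i ∈ T', ∀ j ∈ U, ¬ (i < j ∧ Even j)) ↔
          (T' = desc (m - 1) (k + 1) ∨ T' = descY (m - 1) k) := by
      intro h1 h2
      apply ih T' (m - 1) hk' hnd'
      · intro x hx
        have := h2 x hx
        have := hT x (by simp [hx])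
        omega
      · intro x hx hxe
        have := hU x hx hxe
        have : x ≠ 2 * m := by rintro rfl; exact hsn.2 (h1 ▸ hx)
        obtain ⟨y, hy⟩ := hxe
        omega
      · intro e h3 h4 h5
        have := he e h3 (by omega) h5
        simp only [List.mem_cons] at this
        rcases this with (h | h) | h
        · omega
        · exact Or.inl h
        · exact Or.inr h
    constructor
    · rintro ⟨h1, h2⟩
      rw [List.pairwise_cons] at h1
      have hse := (h1.1 t ht).2
      have hsm : s = 2 * m := by
        by_contra hc
        have hlt : s < 2 * m := by
          obtain ⟨y, hy⟩ := hse
          omega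
        rcases he (2 * m) (by omega) le_rfl (by simp) with h3 | h3
        · simp only [List.mem_cons] at h3
          rcases h3 with h3 | h3
          · omega
          · have := (h1.1 _ h3).1
            omega
        · exact h2 s (by simp) _ h3 ⟨hlt, by simp⟩
      have := (key hsm (fun x hx => hsm ▸ (h1.1 x hx).1)).1
        ⟨h1.2, fun i hi => h2 i (by simp [hi])⟩
      subst hsm
      simpa [desc, descY] using this
    · intro h
      have hsm : s = 2 * m := by
        rcases h with h | h
        · rw [desc] at h; exact (List.cons.inj h).1
        · rw [descY] at h; exact (List.cons.inj h).1
      have hT' : T' = desc (m - 1) (k + 1) ∨ T' = descY (m - 1) k := by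
        subst hsm
        rcases h with h | h
        · left; rw [desc] at h; exact (List.cons.inj h).2
        · right; rw [descY] at h; exact (List.cons.inj h).2
      have hlt : ∀ x ∈ T', x < 2 * m := by
        intro x hx
        rcases hT' with h | h
        · have := (desc_bound _ _ x (h ▸ hx)).1
          omega
        · have := (descY_bound _ _ x (h ▸ hx))
          omega
      have := (key hsm hlt).2 hT'
      refine ⟨List.pairwise_cons.2 ⟨fun x hx => ⟨hsm ▸ hlt x hx, by simp [hsm]⟩, this.1⟩, ?_⟩
      intro i hi j hj
      simp only [List.mem_cons] at hi
      rcases hi with rfl | hi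
      · rintro ⟨h3, h4⟩
        have := hU j hj h4
        omega
      · exact this.2 i hi j hj

lemma insert_iff (T U : List ℕ) (N : ℕ) (h : ∀ x ∈ T ++ U, x < N) (hnd : (T ++ U).Nodup)
    (hg : (T ++ U).Triplewise Adm) :
    (T ++ N :: U).Triplewise Adm ↔
      (T.Pairwise (fun i j => j < i ∧ Even i) ∧ ∀ i ∈ T, ∀ j ∈ U, ¬ (i < j ∧ Even j)) := by
  simp only [List.triplewise_append, List.triplewise_cons, List.pairwise_cons,
    List.forall_mem_cons] at *
  have hTn : T.Nodup := hnd.of_append_left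
  have e1 : T.Pairwise (fun x y => Adm x y N) ↔ T.Pairwise (fun i j => j < i ∧ Even i) := by
    have hp : T.Pairwise (fun x y => x < N ∧ y < N ∧ x ≠ y) := by
      have h1 : T.Pairwise (fun x y => x ≠ y) := hTn
      refine h1.imp_of_mem ?_
      intro a b ha hb hab
      exact ⟨h a (by simp [ha]), h b (by simp [hb]), hab⟩
    constructor
    · intro h1
      refine (h1.and hp).imp ?_
      rintro a b ⟨⟨h1, h2, h3⟩, h4, h5, h6⟩
      constructor
      · by_contra; exact h1 ⟨by omega, by omega⟩
      · by_contra h7; exact h3 ⟨by by_contra; exact h1 ⟨by omega, by omega⟩, h4, h7⟩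
    · intro h1
      refine (h1.and hp).imp ?_
      rintro a b ⟨⟨h1, h2⟩, h4, h5, h6⟩
      refine ⟨by omega, by omega, ?_⟩
      rintro ⟨_, _, h7⟩; exact h7 h2
  have e2 : U.Pairwise (Adm N) := by
    refine List.Pairwise.imp_of_mem (R := fun _ _ => True) ?_ (List.pairwise_of_forall (by simp))
    intro a b ha hb _
    have := h a (by simp [ha])
    have := h b (by simp [hb])
    refine ⟨by omega, by omega, by omega⟩
  have e3 : (∀ i ∈ T, ∀ j ∈ U, Adm i N j) ↔ ∀ i ∈ T, ∀ j ∈ U, ¬ (i < j ∧ Even j) := by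
    refine forall₂_congr fun i hi => forall₂_congr fun j hj => ?_
    have := h i (by simp [hi])
    have := h j (by simp [hj])
    constructor
    · rintro ⟨_, h2, _⟩ ⟨h3, h4⟩
      exact h2 ⟨h3, this, h4⟩
    · intro h1
      refine ⟨by omega, fun h2 => h1 ⟨h2.1, h2.2.2⟩, by omega⟩
  rw [e1, ← e3]
  constructor
  · rintro ⟨_, _, h3, h4, _⟩
    exact ⟨h4, fun i hi => (h3 i hi).1⟩
  · rintro ⟨h1, h2⟩
    exact ⟨hg.1, ⟨e2, hg.2.1⟩, fun i hi => ⟨h2 i hi, hg.2.2.1 i hi⟩, h1, hg.2.2.2⟩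

open Classical in
/-- Admissible rankings of `1,…,n`, as lists from the bottom to the top. -/
noncomputable def dset (n : ℕ) : Finset (List ℕ) :=
  ((List.range' 1 n).permutations.toFinset).filter (fun l => l.Triplewise Adm)

lemma mem_dset {n : ℕ} {l : List ℕ} :
    l ∈ dset n ↔ l.Perm (List.range' 1 n) ∧ l.Triplewise Adm := by
  simp [dset]

lemma dset_nodup {n : ℕ} {l : List ℕ} (h : l ∈ dset n) : l.Nodup :=
  (mem_dset.1 h).1.nodup_iff.2 List.nodup_range'

lemma dset_length {n : ℕ} {l : List ℕ} (h : l ∈ dset n) : l.length = n := by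
  simpa using (mem_dset.1 h).1.length_eq

lemma dset_mem {n : ℕ} {l : List ℕ} (h : l ∈ dset n) (x : ℕ) : x ∈ l ↔ 0 < x ∧ x ≤ n := by
  rw [(mem_dset.1 h).1.mem_iff, List.mem_range'_1]
  omega

/-- Insertion of `N` above the `j` lowest entries. -/
def ins (N j : ℕ) (l : List ℕ) : List ℕ := l.take j ++ N :: l.drop j

open Classical in
lemma dset_succ_sum (n : ℕ) (g : List ℕ → ℕ) :
    ∑ l ∈ dset (n + 1), g l = ∑ l ∈ dset n, ∑ j ∈ Finset.range (n + 1),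
      if (ins (n + 1) j l).Triplewise Adm then g (ins (n + 1) j l) else 0 := by
  rw [← Finset.sum_product', ← Finset.sum_filter]
  symm
  refine Finset.sum_bij (fun p _ => ins (n + 1) p.2 p.1) ?_ ?_ ?_ ?_
  · rintro ⟨l, j⟩ h
    simp only [Finset.mem_filter, Finset.mem_product, Finset.mem_range] at h
    obtain ⟨⟨h1, h2⟩, h3⟩ := h
    rw [mem_dset]
    refine ⟨?_, h3⟩
    have h4 : (ins (n + 1) j l).Perm ((n + 1) :: l) := by
      have := (List.perm_middle (a := n + 1) (l₁ := l.take j) (l₂ := l.drop j))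
      rwa [List.take_append_drop] at this
    refine h4.trans ?_
    rw [List.range'_1_concat]
    refine ((mem_dset.1 h1).1.cons _).trans ?_
    rw [add_comm 1 n]
    exact (List.perm_append_singleton _ _).symm
  · rintro ⟨l, j⟩ h ⟨l', j'⟩ h' heq
    simp only [Finset.mem_filter, Finset.mem_product, Finset.mem_range] at h h'
    obtain ⟨⟨h1, h2⟩, -⟩ := h
    obtain ⟨⟨h1', h2'⟩, -⟩ := h'
    have hn : n + 1 ∉ l := by rw [dset_mem h1]; omega
    have hn' : n + 1 ∉ l' := by rw [dset_mem h1']; omega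
    simp only [ins] at heq
    have h3 : n + 1 ∉ l.take j := fun h => hn (List.mem_of_mem_take h)
    have h4 : n + 1 ∉ l'.take j' := fun h => hn' (List.mem_of_mem_take h)
    have hlen := dset_length h1
    have hlen' := dset_length h1'
    have h5 := List.append_cons_inj_of_notMem (x₁ := l.take j) (x₂ := l'.take j')
      (z₁ := l.drop j) (z₂ := l'.drop j') (a₁ := n + 1) (a₂ := n + 1)
    have h6 : l.take j = l'.take j' ∧ l.drop j = l'.drop j' := by
      have h7 : n + 1 ∉ l.drop j := fun h => hn (List.mem_of_mem_drop h)
      have h8 : n + 1 ∉ l'.drop j' := fun h => hn' (List.mem_of_mem_drop h)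
      grind
    have e1 : j = j' := by
      have := congrArg List.length h6.1
      simp only [List.length_take] at this
      omega
    subst e1
    have e2 : l = l' := by
      rw [← List.take_append_drop j l, ← List.take_append_drop j l', h6.1, h6.2]
    rw [e2]
  · intro l hl
    have hm : n + 1 ∈ l := by rw [dset_mem hl]; omega
    obtain ⟨T, U, rfl⟩ := List.append_of_mem hm
    have hlen := dset_length hl
    simp only [List.length_append, List.length_cons] at hlen
    have hins : ins (n + 1) T.length (T ++ U) = T ++ (n + 1) :: U := by simp [ins]
    refine ⟨(T ++ U, T.length), ?_, hins⟩
    simp only [Finset.mem_filter, Finset.mem_product, Finset.mem_range, hins]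
    obtain ⟨h1, h2⟩ := mem_dset.1 hl
    refine ⟨⟨mem_dset.2 ⟨?_, ?_⟩, by omega⟩, h2⟩
    · rw [List.range'_1_concat, add_comm 1 n] at h1
      have := (List.perm_middle.symm.trans h1).trans (List.perm_append_singleton _ _)
      exact List.Perm.cons_inv this
    · simp only [List.triplewise_append, List.triplewise_cons, List.pairwise_cons,
        List.forall_mem_cons] at h2 ⊢
      exact ⟨h2.1, h2.2.1.2, fun a ha => (h2.2.2.1 a ha).2, h2.2.2.2.2⟩
  · intro p _
    rfl

lemma ok_zero {n : ℕ} {l : List ℕ} (h : l ∈ dset n) : (ins (n + 1) 0 l).Triplewise Adm := by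
  have := insert_iff [] l (n + 1) (fun x hx => by
    have := (dset_mem h x).1 (by simpa using hx); omega) (by simpa using dset_nodup h)
    (by simpa using (mem_dset.1 h).2)
  simp only [List.nil_append] at this
  simpa [ins] using this.2 (by simp)

lemma ok_succ {n m k : ℕ} {l : List ℕ} (hn : n = 2 * m ∨ n = 2 * m + 1) (h : l ∈ dset n)
    (hk : k < n) : (ins (n + 1) (k + 1) l).Triplewise Adm ↔
      (desc m (k + 1) <+: l ∨ descY m k <+: l) := by
  have hlen := dset_length h
  have hh := h
  rw [← List.take_append_drop (k + 1) l] at hh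
  have hb : ∀ x ∈ l.take (k + 1) ++ l.drop (k + 1), 0 < x ∧ x ≤ n :=
    fun x hx => (dset_mem hh x).1 hx
  unfold ins
  rw [insert_iff _ _ _ (fun x hx => by have := hb x hx; omega) (dset_nodup hh) (mem_dset.1 hh).2,
    spec_core _ _ m k (by simp; omega) (dset_nodup hh)]
  · rw [List.prefix_iff_eq_take, List.prefix_iff_eq_take, desc_length, descY_length]
    exact or_congr eq_comm eq_comm
  · intro x hx
    have := hb x (List.mem_append_left _ hx)
    omega
  · intro x hx hxe
    have := hb x (List.mem_append_right _ hx)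
    obtain ⟨y, hy⟩ := hxe
    omega
  · intro e h1 h2 _
    have := (dset_mem hh e).2 ⟨h1, by omega⟩
    exact List.mem_append.1 this

lemma desc_prefix_cons_odd (m k j x : ℕ) (t : List ℕ) (hx : ¬ Even x) :
    desc m k <+: desc m j ++ x :: t ↔ k ≤ j := by
  induction k generalizing m j with
  | zero => simp [desc]
  | succ k ih =>
    cases j with
    | zero =>
      simp only [desc, List.nil_append, List.cons_prefix_cons]
      constructor
      · rintro ⟨rfl, _⟩; simp at hx
      · omega
    | succ j => simp [desc, List.cons_prefix_cons, ih]

lemma descY_prefix_cons_odd (m k j x : ℕ) (t : List ℕ) (hx : ¬ Even x) :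
    descY m k <+: desc m j ++ x :: t ↔ k = j ∧ x = 2 * (m - k) + 1 := by
  induction k generalizing m j with
  | zero =>
    cases j with
    | zero =>
      simp [desc, descY, List.cons_prefix_cons, eq_comm]
    | succ j =>
      simp [desc, descY, List.cons_prefix_cons]
  | succ k ih =>
    cases j with
    | zero =>
      simp only [desc, descY, List.nil_append, List.cons_prefix_cons]
      constructor
      · rintro ⟨rfl, _⟩; simp at hx
      · omega
    | succ j =>
      simp [desc, descY, List.cons_prefix_cons, ih, Nat.sub_sub, add_comm 1 k]

lemma descY_eq (m k : ℕ) : descY m k = desc m k ++ [2 * (m - k) + 1] := by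
  induction k generalizing m with
  | zero => simp [desc, descY]
  | succ k ih => simp [desc, descY, ih, Nat.sub_sub, add_comm 1 k]

lemma desc_descY_excl (m k : ℕ) (l : List ℕ) : ¬ (desc m (k + 1) <+: l ∧ descY m k <+: l) := by
  rintro ⟨h1, ⟨t, rfl⟩⟩
  rw [descY_eq, List.append_assoc, List.singleton_append,
    desc_prefix_cons_odd _ _ _ _ _ (by simp)] at h1
  omega

open Classical in
lemma transfer {n m : ℕ} (hn : n = 2 * m ∨ n = 2 * m + 1) (g : List ℕ → ℕ) :
    ∑ l ∈ dset (n + 1), g l = ∑ l ∈ dset n, g ((n + 1) :: l) +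
      ∑ k ∈ Finset.range n, (∑ l ∈ dset n,
        ((if desc m (k + 1) <+: l then g (ins (n + 1) (k + 1) l) else 0) +
          (if descY m k <+: l then g (ins (n + 1) (k + 1) l) else 0))) := by
  rw [dset_succ_sum, Finset.sum_comm (s := Finset.range n), ← Finset.sum_add_distrib]
  refine Finset.sum_congr rfl fun l hl => ?_
  rw [Finset.sum_range_succ', add_comm, if_pos (ok_zero hl)]
  congr 1
  refine Finset.sum_congr rfl fun k hk => ?_
  rw [Finset.mem_range] at hk
  have h1 := ok_succ hn hl hk
  have h2 := desc_descY_excl m k l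
  by_cases h3 : desc m (k + 1) <+: l <;> by_cases h4 : descY m k <+: l <;>
    simp_all

open Classical in
/-- Number of rankings with prescribed lowest entries. -/
noncomputable def cnt (n : ℕ) (p : List ℕ) : ℕ := ∑ l ∈ dset n, if p <+: l then 1 else 0

lemma cnt_nil (n : ℕ) : cnt n [] = (dset n).card := by simp [cnt]

lemma cnt_eq_zero {n : ℕ} {p : List ℕ} (h : ∃ x ∈ p, ¬ (0 < x ∧ x ≤ n)) : cnt n p = 0 := by
  obtain ⟨x, hx, h⟩ := h
  refine Finset.sum_eq_zero fun l hl => if_neg fun hp => h ?_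
  exact (dset_mem hl x).1 (hp.subset hx)

lemma not_prefix_ins {n k : ℕ} {l p : List ℕ} (h : l ∈ dset n) (hk : k < n) :
    ¬ ((n + 1) :: p <+: ins (n + 1) (k + 1) l) := by
  have hlen := dset_length h
  obtain ⟨a, t, rfl⟩ := List.exists_cons_of_length_pos (l := l) (by omega)
  have ha := (dset_mem h a).1 (by simp)
  simp only [ins, List.take_succ_cons, List.cons_append, List.cons_prefix_cons]
  rintro ⟨h1, _⟩
  omega

lemma cnt_cons (n : ℕ) (p : List ℕ) : cnt (n + 1) ((n + 1) :: p) = cnt n p := by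
  have hn : n = 2 * (n / 2) ∨ n = 2 * (n / 2) + 1 := by omega
  unfold cnt
  rw [transfer hn, Finset.sum_eq_zero (s := Finset.range n), add_zero]
  · simp [List.cons_prefix_cons]
  · intro k hk
    refine Finset.sum_eq_zero fun l hl => ?_
    simp [not_prefix_ins hl (Finset.mem_range.1 hk)]

lemma cnt_nil_succ {n m : ℕ} (hn : n = 2 * m ∨ n = 2 * m + 1) :
    cnt (n + 1) [] = cnt n [] +
      ∑ k ∈ Finset.range n, (cnt n (desc m (k + 1)) + cnt n (descY m k)) := by
  unfold cnt
  rw [transfer hn]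
  simp [Finset.sum_add_distrib]

lemma ins_append (N : ℕ) (T t : List ℕ) (k : ℕ) (h : T.length = k) :
    ins N k (T ++ t) = T ++ N :: t := by
  subst h; simp [ins]

lemma cnt_odd_desc (m k : ℕ) :
    cnt (2 * m + 1) (desc m (k + 1)) = ∑ j ∈ Finset.range (2 * m),
      ((if k ≤ j then cnt (2 * m) (desc m (j + 1)) else 0) +
        (if k + 1 ≤ j then cnt (2 * m) (descY m j) else 0)) := by
  unfold cnt
  rw [transfer (Or.inl rfl), Finset.sum_eq_zero (s := dset (2 * m)), zero_add]
  · refine Finset.sum_congr rfl fun j _ => ?_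
    rw [Finset.sum_add_distrib]
    congr 1
    · split_ifs with h
      · refine Finset.sum_congr rfl fun l _ => ?_
        split_ifs with h1 h2 h2
        · rfl
        · exfalso; apply h2
          obtain ⟨t, rfl⟩ := h1
          rw [ins_append _ _ _ _ (desc_length _ _), desc_prefix_cons_odd _ _ _ _ _ (by simp)]
          omega
        · rfl
      · refine Finset.sum_eq_zero fun l _ => ?_
        split_ifs with h1 h2
        · exfalso
          obtain ⟨t, rfl⟩ := h1
          rw [ins_append _ _ _ _ (desc_length _ _),
            desc_prefix_cons_odd _ _ _ _ _ (by simp)] at h2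
          omega
        · rfl
        · rfl
    · have key : ∀ t, desc m (k + 1) <+: ins (2 * m + 1) (j + 1) (descY m j ++ t) ↔ k + 1 ≤ j := by
        intro t
        rw [ins_append _ _ _ _ (descY_length _ _), descY_eq, List.append_assoc,
          List.singleton_append, desc_prefix_cons_odd _ _ _ _ _ (by simp)]
      split_ifs with h
      · refine Finset.sum_congr rfl fun l _ => ?_
        split_ifs with h1 h2 h2
        · rfl
        · exfalso; apply h2
          obtain ⟨t, rfl⟩ := h1
          exact (key t).2 h
        · rfl
      · refine Finset.sum_eq_zero fun l _ => ?_
        split_ifs with h1 h2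
        · exfalso
          obtain ⟨t, rfl⟩ := h1
          exact h ((key t).1 h2)
        · rfl
        · rfl
  · intro l _
    rw [if_neg]
    simp only [desc, List.cons_prefix_cons]
    omega

lemma cnt_odd_descY (m k : ℕ) :
    cnt (2 * m + 1) (descY m (k + 1)) = cnt (2 * m) (descY m (k + 1)) := by
  have h0 : cnt (2 * m + 1) (descY m (k + 1)) = ∑ j ∈ Finset.range (2 * m),
      (if j = k + 1 then cnt (2 * m) (descY m j) else 0) := by
    unfold cnt
    rw [transfer (Or.inl rfl), Finset.sum_eq_zero (s := dset (2 * m)), zero_add]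
    · refine Finset.sum_congr rfl fun j _ => ?_
      have key : ∀ t, descY m (k + 1) <+: ins (2 * m + 1) (j + 1) (descY m j ++ t) ↔ j = k + 1 := by
        intro t
        rw [ins_append _ _ _ _ (descY_length _ _), descY_eq m j, List.append_assoc,
          List.singleton_append, descY_prefix_cons_odd _ _ _ _ _ (by simp)]
        constructor
        · intro h; exact h.1.symm
        · rintro rfl; simp
      rw [Finset.sum_add_distrib, Finset.sum_eq_zero, zero_add]
      · split_ifs with h
        · refine Finset.sum_congr rfl fun l _ => ?_
          split_ifs with h1 h2 h2
          · rfl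
          · exfalso; apply h2
            obtain ⟨t, rfl⟩ := h1
            exact (key t).2 h
          · rfl
        · refine Finset.sum_eq_zero fun l _ => ?_
          split_ifs with h1 h2
          · exfalso
            obtain ⟨t, rfl⟩ := h1
            exact h ((key t).1 h2)
          · rfl
          · rfl
      · intro l hl
        split_ifs with h1 h2
        · exfalso
          have h0 : m ≠ 0 := by
            rintro rfl
            have := (dset_mem hl (2 * 0)).1 (h1.subset (by simp [desc]))
            omega
          obtain ⟨t, rfl⟩ := h1
          rw [ins_append _ _ _ _ (desc_length _ _),
            descY_prefix_cons_odd _ _ _ _ _ (by simp)] at h2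
          omega
        · rfl
        · rfl
    · intro l _
      rw [if_neg]
      simp only [descY, List.cons_prefix_cons]
      omega
  rw [h0, Finset.sum_ite_eq']
  split_ifs with h
  · rfl
  · rw [Finset.mem_range] at h
    rw [cnt_eq_zero ⟨0, zero_mem_descY _ _ (by omega), by omega⟩]

/-- Size of the domain on `2m` alternatives. -/
noncomputable def bb (m : ℕ) : ℕ := cnt (2 * m) []
/-- Rankings with `k` even numbers at the bottom. -/
noncomputable def HH (m k : ℕ) : ℕ := cnt (2 * m) (desc m k)
/-- Rankings with `k` even numbers and then an odd one at the bottom. -/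
noncomputable def YY (m k : ℕ) : ℕ := cnt (2 * m) (descY m k)

lemma HH_gt {m k : ℕ} (h : m < k) : HH m k = 0 :=
  cnt_eq_zero ⟨0, zero_mem_desc _ _ h, by omega⟩

lemma YY_gt {m k : ℕ} (h : m < k) : YY m k = 0 :=
  cnt_eq_zero ⟨0, zero_mem_descY _ _ h, by omega⟩

lemma YY_zero (m : ℕ) : YY m 0 = 0 :=
  cnt_eq_zero ⟨2 * m + 1, by simp [descY], by omega⟩

lemma HH_succ (m k : ℕ) : HH (m + 1) (k + 1) = cnt (2 * m + 1) (desc m k) :=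
  cnt_cons (2 * m + 1) (desc m k)

lemma YY_succ (m k : ℕ) : YY (m + 1) (k + 1) = cnt (2 * m + 1) (descY m k) :=
  cnt_cons (2 * m + 1) (descY m k)

lemma HH_two (m : ℕ) : HH (m + 1) 2 = ∑ j ∈ Finset.range (2 * m), (HH m (j + 1) + YY m j) := by
  rw [HH_succ, cnt_odd_desc]
  refine Finset.sum_congr rfl fun j _ => ?_
  rw [if_pos (Nat.zero_le _)]
  congr 1
  split_ifs with h
  · rfl
  · have : j = 0 := by omega
    subst this
    exact (YY_zero m).symm

lemma HH_one (m : ℕ) : HH (m + 1) 1 = bb m + HH (m + 1) 2 := by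
  rw [HH_two, HH_succ]
  exact cnt_nil_succ (Or.inl rfl)

lemma HH_rec (m k : ℕ) :
    HH (m + 1) (k + 2) = HH (m + 1) (k + 3) + HH m (k + 1) + YY m (k + 1) := by
  have e1 : HH m (k + 1) = ∑ j ∈ Finset.range (2 * m), if j = k then HH m (j + 1) else 0 := by
    rw [Finset.sum_ite_eq']
    split_ifs with h
    · rfl
    · rw [Finset.mem_range] at h
      exact HH_gt (by omega)
  have e2 : YY m (k + 1) = ∑ j ∈ Finset.range (2 * m), if j = k + 1 then YY m j else 0 := by
    rw [Finset.sum_ite_eq']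
    split_ifs with h
    · rfl
    · rw [Finset.mem_range] at h
      exact YY_gt (by omega)
  rw [e1, e2, HH_succ, HH_succ, cnt_odd_desc, cnt_odd_desc, ← Finset.sum_add_distrib,
    ← Finset.sum_add_distrib]
  refine Finset.sum_congr rfl fun j _ => ?_
  change ((if k ≤ j then HH m (j + 1) else 0) + (if k + 1 ≤ j then YY m j else 0)) =
    ((if k + 1 ≤ j then HH m (j + 1) else 0) + (if k + 1 + 1 ≤ j then YY m j else 0)) + _ + _
  rcases lt_trichotomy j k with h | h | h
  · simp [show ¬ k ≤ j by omega, show ¬ k + 1 ≤ j by omega, show ¬ k + 1 + 1 ≤ j by omega,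
      show j ≠ k by omega, show j ≠ k + 1 by omega]
  · subst h; simp
  · rcases eq_or_ne j (k + 1) with rfl | h'
    · simp
    · simp [show k ≤ j by omega, show k + 1 ≤ j by omega, show k + 1 + 1 ≤ j by omega,
        show j ≠ k by omega, h']

lemma bb_succ (m : ℕ) : bb (m + 1) = HH (m + 2) 2 := by
  rw [HH_two, Finset.sum_add_distrib, show 2 * (m + 1) = (2 * m + 1) + 1 by ring,
    Finset.sum_range_succ' _ (2 * m + 1), Finset.sum_range_succ' (YY (m + 1)) (2 * m + 1), YY_zero]
  have h := cnt_nil_succ (n := 2 * m + 1) (m := m) (Or.inr rfl)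
  have h1 : bb (m + 1) = cnt (2 * m + 1 + 1) [] := rfl
  rw [h1, h, Finset.sum_add_distrib]
  simp only [HH_succ, YY_succ]
  rw [show desc m 0 = [] from rfl]
  ring

lemma YY_add (m k : ℕ) : YY (m + k + 1) (k + 1) = bb m := by
  induction k with
  | zero =>
    rw [YY_succ]
    exact cnt_cons (2 * m) []
  | succ k ih => rw [YY_succ, cnt_odd_descY]; exact ih

lemma bb_zero : bb 0 = 1 := by
  rw [bb, cnt_nil]
  have : dset 0 = {[]} := by
    ext l
    simp only [mem_dset, Finset.mem_singleton]
    constructor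
    · rintro ⟨h, _⟩; simpa using h
    · rintro rfl; simp
  simp [this]


open PowerSeries in
lemma bb_rec (m : ℕ) :
    (bb (m + 3) : ℤ) = 4 * bb (m + 2) + 4 * bb (m + 1) - catalan (m + 2) := by
  let C : ℤ⟦X⟧ := PowerSeries.mk fun n => (catalan n : ℤ)
  let B : ℤ⟦X⟧ := PowerSeries.mk fun n => (bb n : ℤ)
  let g : ℕ → ℤ⟦X⟧ := fun k => PowerSeries.mk fun n => (HH (n + k + 1) (k + 1) : ℤ)
  have hC : C = 1 + X * C ^ 2 := by
    have h := congrArg (PowerSeries.map (Nat.castRingHom ℤ)) catalanSeries_sq_mul_X_add_one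
    have h1 : PowerSeries.map (Nat.castRingHom ℤ) catalanSeries = C := by
      ext n; simp [C, catalanSeries]
    rw [map_add, map_mul, map_pow, h1, PowerSeries.map_X, map_one] at h
    linear_combination -h
  have hg : ∀ k, g (k + 1) = X * g (k + 2) + g k + B := by
    intro k
    ext n
    simp only [map_add]
    cases n with
    | zero =>
      rw [coeff_zero_X_mul]
      simp only [g, B, coeff_mk]
      have h1 := HH_rec (k + 1) k
      have h2 := YY_add 0 k
      rw [HH_gt (show k + 1 + 1 < k + 3 by omega)] at h1
      simp only [zero_add] at h1 h2 ⊢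
      rw [h2] at h1
      exact_mod_cast h1
    | succ n =>
      rw [coeff_succ_X_mul]
      simp only [g, B, coeff_mk]
      have h1 := HH_rec (n + 1 + k + 1) k
      have h2 := YY_add (n + 1) k
      rw [h2] at h1
      rw [show n + (k + 2) + 1 = n + 1 + k + 1 + 1 by ring,
        show n + 1 + (k + 1) + 1 = n + 1 + k + 1 + 1 by ring]
      exact_mod_cast h1
  have hg0 : g 0 = 2 * B - 1 := by
    have : g 0 + 1 = B + B := by
      ext n
      simp only [map_add, g, B, coeff_mk, coeff_one]
      cases n with
      | zero =>
        have h1 := HH_one 0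
        rw [HH_gt (show 0 + 1 < 2 by omega)] at h1
        simp [bb_zero] at h1 ⊢
        simp [h1]
      | succ n =>
        have h1 := HH_one (n + 1)
        have h2 := bb_succ n
        have h3 : HH (n + 1 + 1) 1 = bb (n + 1) + bb (n + 1) := by rw [h1, h2]
        simp only [add_zero, zero_add, Nat.add_eq_zero_iff, one_ne_zero, and_false, if_false]
        exact_mod_cast h3
    linear_combination this
  have hg1 : X * g 1 = B - 1 := by
    have : X * g 1 + 1 = B := by
      ext n
      rw [map_add]
      cases n with
      | zero => simp [B, bb_zero]
      | succ n =>
        rw [coeff_succ_X_mul]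
        simp only [g, B, coeff_mk, coeff_one, bb_succ]
        simp
    linear_combination this
  let e : ℕ → ℤ⟦X⟧ := fun k => X * g k + B
  have he : ∀ k, X * e (k + 2) = e (k + 1) - e k := by
    intro k
    simp only [e]
    linear_combination -X * hg k
  let q : ℕ → ℤ⟦X⟧ := fun k => e (k + 1) - C * e k
  have hq : ∀ k, q k = X * (C * q (k + 1)) := by
    intro k
    simp only [q]
    linear_combination -C * he k - e (k + 1) * hC
  have hdvd : ∀ j k, (X : ℤ⟦X⟧) ^ j ∣ q k := by
    intro j
    induction j with
    | zero => simp
    | succ j ih =>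
      intro k
      rw [hq k, pow_succ']
      exact mul_dvd_mul_left _ ((ih (k + 1)).mul_left C)
  have hq0 : q 0 = 0 := by
    ext n
    have := (X_pow_dvd_iff.1 (hdvd (n + 1) 0)) n (by omega)
    simpa using this
  have h1 : 2 * B - 1 = C * (X * (2 * B - 1) + B) := by
    simp only [q, e, zero_add] at hq0
    rw [hg0] at hq0
    linear_combination hq0 - hg1
  have h2 : B * (2 - C ^ 2) = 1 := by
    linear_combination C * h1 - (2 * B - 1) * hC
  have h3 : (1 - 4 * X - 4 * X ^ 2) * B = 1 - X - 2 * X ^ 2 - X * C := by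
    linear_combination (1 - X - 2 * X ^ 2 - X * C) * h2
      - B * (-1 - 2 * X - C) * hC
  have h4 : B = 1 - X - X * (X * 2) - X * C + X * (B * 4) + X * (X * (B * 4)) := by
    linear_combination h3
  have h5 := congrArg (coeff (m + 3)) h4
  simp only [map_add, map_sub, coeff_succ_X_mul] at h5
  have e1 : (4 : ℤ⟦X⟧) = PowerSeries.C 4 := by simp
  have e2 : (2 : ℤ⟦X⟧) = PowerSeries.C 2 := by simp
  rw [e1, e2, coeff_mul_C, coeff_mul_C, coeff_C, coeff_one, coeff_X] at h5
  simp [B, C] at h5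
  linarith


lemma bb_one : bb 1 = 2 := by
  have h1 := bb_succ 0
  have h2 := HH_rec 1 0
  have h3 := HH_one 0
  have h4 := YY_add 0 0
  rw [HH_gt (show 0 + 1 < 2 by omega), bb_zero] at h3
  rw [HH_gt (show 1 + 1 < 0 + 3 by omega)] at h2
  rw [bb_zero] at h4
  simp only [zero_add, Nat.reduceAdd] at *
  omega

lemma bb_two : bb 2 = 9 := by
  have h1 := bb_succ 1
  have h2 := HH_rec 2 0
  have h3 := HH_rec 2 1
  have h4 := HH_one 1
  have h5 := bb_succ 0
  have h6 := YY_add 1 0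
  have h7 := YY_add 0 1
  have h8 := bb_one
  rw [HH_gt (show 2 + 1 < 1 + 3 by omega)] at h3
  rw [bb_zero] at h7
  simp only [zero_add, Nat.reduceAdd] at *
  omega

lemma partial_catalan_le (z s : ℝ) (hz : 0 ≤ z) (hs : 0 ≤ s) (h : s = 1 + z * s ^ 2) (n : ℕ) :
    ∑ i ∈ Finset.range n, (catalan i : ℝ) * z ^ i ≤ s := by
  induction n with
  | zero => simpa using hs
  | succ n ih =>
    rw [Finset.sum_range_succ']
    have h0 : ∀ i, 0 ≤ (catalan i : ℝ) * z ^ i := fun i => by positivity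
    have h1 : ∑ i ∈ Finset.range n, (catalan (i + 1) : ℝ) * z ^ (i + 1) ≤
        z * (∑ i ∈ Finset.range n, (catalan i : ℝ) * z ^ i) ^ 2 := by
      have e1 : ∀ i, (catalan (i + 1) : ℝ) * z ^ (i + 1) =
          z * ∑ p ∈ Finset.HasAntidiagonal.antidiagonal i,
            ((catalan p.1 : ℝ) * z ^ p.1) * ((catalan p.2 : ℝ) * z ^ p.2) := by
        intro i
        rw [catalan_succ', Nat.cast_sum, Finset.sum_mul, Finset.mul_sum]
        refine Finset.sum_congr rfl fun p hp => ?_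
        rw [← Finset.HasAntidiagonal.mem_antidiagonal.1 hp]
        push_cast
        ring
      simp only [e1]
      rw [← Finset.mul_sum]
      refine mul_le_mul_of_nonneg_left ?_ hz
      rw [← Finset.sum_biUnion, sq, Finset.sum_mul_sum, ← Finset.sum_product']
      · refine Finset.sum_le_sum_of_subset_of_nonneg ?_ ?_
        · intro p hp
          simp only [Finset.mem_biUnion, Finset.mem_range, Finset.HasAntidiagonal.mem_antidiagonal] at hp
          simp only [Finset.mem_product, Finset.mem_range]
          omega
        · intro p _ _
          exact mul_nonneg (h0 _) (h0 _)
      · intro i _ j _ hij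
        refine Finset.disjoint_left.2 fun p hp hq => hij ?_
        rw [Finset.HasAntidiagonal.mem_antidiagonal] at hp hq
        omega
    have h2 : 0 ≤ ∑ i ∈ Finset.range n, (catalan i : ℝ) * z ^ i :=
      Finset.sum_nonneg fun i _ => h0 i
    have h3 : (∑ i ∈ Finset.range n, (catalan i : ℝ) * z ^ i) ^ 2 ≤ s ^ 2 :=
      pow_le_pow_left₀ h2 ih 2
    have h4 := mul_le_mul_of_nonneg_left h3 hz
    simp only [catalan_zero, Nat.cast_one, pow_zero, mul_one]
    linarith

lemma catalan_hasSum (z s : ℝ) (hz : 0 ≤ z) (hs : 0 ≤ s) (h : s = 1 + z * s ^ 2)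
    (h2 : 2 * z * s < 1) : HasSum (fun i => (catalan i : ℝ) * z ^ i) s := by
  have h0 : ∀ i, 0 ≤ (catalan i : ℝ) * z ^ i := fun i => by positivity
  have hle := partial_catalan_le z s hz hs h
  have hsum : Summable (fun i => (catalan i : ℝ) * z ^ i) :=
    summable_of_sum_range_le h0 hle
  have hS : ∑' i, (catalan i : ℝ) * z ^ i ≤ s := hsum.tsum_le_of_sum_range_le hle
  have hS0 : 0 ≤ ∑' i, (catalan i : ℝ) * z ^ i := tsum_nonneg h0
  have hn : Summable (fun i => ‖(catalan i : ℝ) * z ^ i‖) := by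
    simpa [abs_of_nonneg hz] using hsum
  have heq := tsum_mul_tsum_eq_tsum_sum_antidiagonal_of_summable_norm hn hn
  have h1 := hsum.tsum_eq_zero_add
  have h3 : ∑' i, (catalan (i + 1) : ℝ) * z ^ (i + 1) =
      z * ∑' i, ∑ p ∈ Finset.HasAntidiagonal.antidiagonal i,
            ((catalan p.1 : ℝ) * z ^ p.1) * ((catalan p.2 : ℝ) * z ^ p.2) := by
    rw [← tsum_mul_left]
    refine tsum_congr fun i => ?_
    rw [catalan_succ', Nat.cast_sum, Finset.sum_mul, Finset.mul_sum]
    refine Finset.sum_congr rfl fun p hp => ?_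
    rw [← Finset.HasAntidiagonal.mem_antidiagonal.1 hp]
    push_cast
    ring
  rw [h3, ← heq] at h1
  simp only [catalan_zero, Nat.cast_one, pow_zero, mul_one] at h1
  set S := ∑' i, (catalan i : ℝ) * z ^ i with hSdef
  have h5 : (s - S) * (1 - z * (s + S)) = 0 := by linear_combination h - h1
  have h6 : 1 - z * (s + S) ≠ 0 := by
    have := mul_le_mul_of_nonneg_left hS hz
    nlinarith
  have h7 : s = S := by
    have := (mul_eq_zero.1 h5).resolve_right h6
    linarith
  rw [h7]
  exact hsum.hasSum

lemma catalan_le (n : ℕ) : (catalan n : ℝ) ≤ 4 ^ n := by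
  have h1 := succ_mul_catalan_eq_centralBinom n
  have h2 : n.centralBinom ≤ 4 ^ n := by
    have := Nat.choose_le_two_pow (2 * n) n
    rw [pow_mul] at this
    simpa [Nat.centralBinom] using this
  have h3 : catalan n ≤ 4 ^ n := by nlinarith
  exact_mod_cast h3

lemma bb_limit : Filter.Tendsto (fun m : ℕ => (bb m : ℝ) / (2 + 2 * Real.sqrt 2) ^ m)
      Filter.atTop (nhds (Real.sqrt 2 / 4)) := by
  set s := Real.sqrt 2 with hs
  have hs2 : s ^ 2 = 2 := Real.sq_sqrt (by norm_num)
  have hs1 : (1.4 : ℝ) < s := Real.lt_sqrt_of_sq_lt (by norm_num)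
  have hs3 : s < 1.5 := by
    rw [hs, Real.sqrt_lt' (by norm_num)]; norm_num
  set la := 2 + 2 * s with hla
  have hlapos : 0 < la := by linarith
  have hz : la⁻¹ = (s - 1) / 2 := by
    refine inv_eq_of_mul_eq_one_left ?_
    rw [hla]
    linear_combination hs2
  have hrec : ∀ m, (bb (m + 3) : ℝ) = 4 * bb (m + 2) + 4 * bb (m + 1) - catalan (m + 2) := by
    intro m
    exact_mod_cast bb_rec m
  have hsumC : HasSum (fun i => (catalan i : ℝ) * la⁻¹ ^ i) s := by
    apply catalan_hasSum
    · positivity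
    · linarith
    · rw [hz]; linear_combination (1 / 2 - s / 2) * hs2
    · rw [hz]; nlinarith
  -- the dominant part
  have hv : ∀ m : ℕ, ((bb (m + 2) : ℝ) - (2 - 2 * s) * bb (m + 1)) * la⁻¹ ^ m =
      5 + 4 * s - la * ∑ i ∈ Finset.range m, (catalan (i + 2) : ℝ) * la⁻¹ ^ (i + 2) := by
    intro m
    induction m with
    | zero => simp [bb_one, bb_two]; ring
    | succ m ih =>
      rw [Finset.sum_range_succ, mul_add, ← sub_sub, ← ih, hrec m]
      have h1 : la * la⁻¹ = 1 := mul_inv_cancel₀ hlapos.ne'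
      have h2 : la⁻¹ ^ m = la * la⁻¹ ^ (m + 1) := by
        rw [pow_succ]; linear_combination -la⁻¹ ^ m * h1
      have h3 : la * ((catalan (m + 2) : ℝ) * la⁻¹ ^ (m + 2)) = catalan (m + 2) * la⁻¹ ^ (m + 1) := by
        rw [pow_succ _ (m + 1)]; linear_combination (catalan (m + 2) : ℝ) * la⁻¹ ^ (m + 1) * h1
      rw [h3, h2, hla]
      push_cast
      linear_combination (-4 * (bb (m + 1) : ℝ) * la⁻¹ ^ (m + 1)) * hs2
  have htail : Filter.Tendsto (fun m => ∑ i ∈ Finset.range m,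
      (catalan (i + 2) : ℝ) * la⁻¹ ^ (i + 2)) Filter.atTop (nhds (s - (1 + la⁻¹))) := by
    have := ((hasSum_nat_add_iff' 2).2 hsumC).tendsto_sum_nat
    simpa [Finset.sum_range_succ, catalan_one] using this
  have hvlim : Filter.Tendsto (fun m : ℕ =>
      ((bb (m + 2) : ℝ) - (2 - 2 * s) * bb (m + 1)) * la⁻¹ ^ m) Filter.atTop
      (nhds (4 + 4 * s)) := by
    have h1 := (htail.const_mul la).const_sub (5 + 4 * s)
    have h2 : 5 + 4 * s - la * (s - (1 + la⁻¹)) = 4 + 4 * s := by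
      rw [hz, hla]; linear_combination -hs2
    rw [h2] at h1
    exact h1.congr fun m => (hv m).symm
  -- the subdominant part
  have hw : ∀ m : ℕ, |(bb (m + 2) : ℝ) - la * bb (m + 1)| ≤ 22 * 4 ^ m := by
    intro m
    induction m with
    | zero =>
      simp only [zero_add, bb_one, bb_two, hla, abs_le]
      constructor <;> norm_num <;> linarith
    | succ m ih =>
      have h1 : (bb (m + 1 + 2) : ℝ) - la * bb (m + 1 + 1) =
          (2 - 2 * s) * (bb (m + 2) - la * bb (m + 1)) - catalan (m + 2) := by
        rw [show m + 1 + 2 = m + 3 by ring, show m + 1 + 1 = m + 2 by ring, hrec m, hla]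
        linear_combination (-4 * (bb (m + 1) : ℝ)) * hs2
      rw [h1]
      refine (abs_sub _ _).trans ?_
      rw [abs_mul]
      have h2 : |2 - 2 * s| ≤ 1 := by rw [abs_le]; constructor <;> linarith
      have h3 := mul_le_mul h2 ih (abs_nonneg _) zero_le_one
      have h4 := catalan_le (m + 2)
      rw [abs_of_nonneg (Nat.cast_nonneg (catalan (m + 2)) : (0 : ℝ) ≤ catalan (m + 2))]
      have h5 : (4 : ℝ) ^ (m + 2) = 16 * 4 ^ m := by ring
      have h6 : (4 : ℝ) ^ (m + 1) = 4 * 4 ^ m := by ring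
      have h7 : (0 : ℝ) < 4 ^ m := by positivity
      rw [h6]
      linarith
  have hwlim : Filter.Tendsto (fun m : ℕ =>
      ((bb (m + 2) : ℝ) - la * bb (m + 1)) * la⁻¹ ^ m) Filter.atTop (nhds 0) := by
    have h1 : Filter.Tendsto (fun m : ℕ => 22 * (4 * la⁻¹) ^ m) Filter.atTop (nhds 0) := by
      have := (tendsto_pow_atTop_nhds_zero_of_lt_one (r := 4 * la⁻¹) (by positivity)
        (by rw [hz]; linarith)).const_mul 22
      simpa using this
    refine squeeze_zero_norm (fun m => ?_) h1
    rw [Real.norm_eq_abs, abs_mul, abs_of_nonneg (by positivity : 0 ≤ la⁻¹ ^ m), mul_pow,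
      ← mul_assoc]
    exact mul_le_mul_of_nonneg_right (hw m) (by positivity)
  rw [← Filter.tendsto_add_atTop_iff_nat 1]
  have h1 := (hvlim.sub hwlim).mul_const (la⁻¹ / (4 * s))
  have h2 : (4 + 4 * s - 0) * (la⁻¹ / (4 * s)) = s / 4 := by
    rw [hz]; field_simp; linear_combination (2 : ℝ) * hs2
  rw [h2] at h1
  refine h1.congr fun m => ?_
  rw [div_eq_mul_inv (bb (m + 1) : ℝ), ← inv_pow, pow_succ]
  have h3 : s * s⁻¹ = 1 := mul_inv_cancel₀ (by linarith)
  have h4 : la - (2 - 2 * s) = 4 * s := by rw [hla]; ring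
  rw [div_eq_mul_inv, mul_inv]
  linear_combination ((bb (m + 1) : ℝ) * la⁻¹ ^ m * la⁻¹) * h3 +
    ((bb (m + 1) : ℝ) * la⁻¹ ^ m * la⁻¹ * (4⁻¹ * s⁻¹)) * h4


/-- The ranking encoded by `σ`, as a list from the bottom to the top. -/
def toL {n : ℕ} (σ : Equiv.Perm (Fin n)) : List ℕ :=
  List.ofFn (fun p : Fin n => ((σ.symm p.rev : Fin n) : ℕ) + 1)

lemma toL_perm {n : ℕ} (σ : Equiv.Perm (Fin n)) : (toL σ).Perm (List.range' 1 n) := by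
  refine (List.perm_ext_iff_of_nodup ?_ List.nodup_range').2 ?_
  · rw [toL, List.nodup_ofFn]
    intro a b h
    simp only [add_left_inj] at h
    have := σ.symm.injective (Fin.ext h)
    exact Fin.rev_injective this
  · intro x
    rw [toL, List.mem_ofFn, List.mem_range'_1]
    constructor
    · rintro ⟨p, rfl⟩
      have := (σ.symm p.rev).2
      omega
    · intro h
      refine ⟨(σ ⟨x - 1, by omega⟩).rev, ?_⟩
      simp
      omega

lemma toL_triple {n : ℕ} (σ : Equiv.Perm (Fin n)) : (toL σ).Triplewise Adm ↔
    ∀ a b c : Fin n, σ b < σ a → σ c < σ b → Adm ((a : ℕ) + 1) ((b : ℕ) + 1) ((c : ℕ) + 1) := by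
  rw [List.triplewise_iff_getElem]
  constructor
  · intro h a b c h1 h2
    have := h (σ a).rev (σ b).rev (σ c).rev
      (Fin.lt_def.1 (Fin.rev_lt_rev.2 h1)) (Fin.lt_def.1 (Fin.rev_lt_rev.2 h2)) (by simp [toL]; omega)
    simpa only [toL, List.getElem_ofFn, Fin.eta, Fin.rev_rev, Equiv.symm_apply_apply] using this
  · intro h i j k hij hjk hk
    have hk' : k < n := by simpa [toL] using hk
    simp only [toL, List.getElem_ofFn]
    apply h
    · simp only [Equiv.apply_symm_apply, Fin.rev_lt_rev, Fin.mk_lt_mk]; exact hij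
    · simp only [Equiv.apply_symm_apply, Fin.rev_lt_rev, Fin.mk_lt_mk]; exact hjk

lemma toL_iff {n : ℕ} (A : Finset ℕ) (hA : ∀ j, 1 < j → j < n → (j ∈ A ↔ Even j))
    (σ : Equiv.Perm (Fin n)) : (toL σ).Triplewise Adm ↔ inSetAltDomain n A σ := by
  rw [toL_triple]
  constructor
  · intro h i j k hij hjk
    have hij' := Fin.lt_def.1 hij
    have hjk' := Fin.lt_def.1 hjk
    have hk := k.2
    rw [hA _ (by omega) (by omega)]
    refine ⟨fun he => ?_, fun he => ?_⟩
    · rintro ⟨h1, h2⟩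
      rcases lt_trichotomy (σ j) (σ k) with h3 | h3 | h3
      · exact (h i k j h2 h3).2.1 ⟨by omega, by omega, he⟩
      · exact hjk.ne (σ.injective h3)
      · exact (h i j k h1 h3).1 ⟨by omega, by omega⟩
    · rintro ⟨h1, h2⟩
      rcases lt_trichotomy (σ i) (σ j) with h3 | h3 | h3
      · exact (h j i k h3 h1).2.2 ⟨by omega, by omega, he⟩
      · exact hij.ne (σ.injective h3)
      · exact (h i j k h3 h2).1 ⟨by omega, by omega⟩
  · intro h a b c h1 h2
    have ha := a.2
    have hb := b.2
    have hc := c.2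
    refine ⟨?_, ?_, ?_⟩
    · rintro ⟨h3, h4⟩
      have := h a b c (Fin.lt_def.2 (by omega)) (Fin.lt_def.2 (by omega))
      by_cases hm : (b : ℕ) + 1 ∈ A
      · exact this.1 hm ⟨h1, h2.trans h1⟩
      · exact this.2 hm ⟨h2.trans h1, h2⟩
    · rintro ⟨h3, h4, h5⟩
      have := h a c b (Fin.lt_def.2 (by omega)) (Fin.lt_def.2 (by omega))
      exact this.1 ((hA _ (by omega) (by omega)).2 h5) ⟨h2.trans h1, h1⟩
    · rintro ⟨h3, h4, h5⟩
      have := h b a c (Fin.lt_def.2 (by omega)) (Fin.lt_def.2 (by omega))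
      exact this.2 (fun hm => h5 ((hA _ (by omega) (by omega)).1 hm)) ⟨h2, h2.trans h1⟩

lemma fsize_eq {n : ℕ} (A : Finset ℕ) (hA : ∀ j, 1 < j → j < n → (j ∈ A ↔ Even j)) :
    fsize n A = (dset n).card := by
  rw [fsize, ← Set.ncard_coe_finset]
  refine Set.ncard_congr (fun σ _ => toL σ) ?_ ?_ ?_
  · intro σ h
    exact Finset.mem_coe.2 (mem_dset.2 ⟨toL_perm σ, (toL_iff A hA σ).2 h⟩)
  · intro σ τ _ _ h
    have h1 := List.ofFn_injective h
    have h2 : σ.symm = τ.symm := by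
      ext x
      have := congrFun h1 x.rev
      simpa using this
    rw [← Equiv.symm_symm σ, h2, Equiv.symm_symm]
  · intro l hl
    have hl' : l ∈ dset n := hl
    have hlen := dset_length hl'
    have hnd := dset_nodup hl'
    subst hlen
    have hb : ∀ p : Fin l.length, 0 < l[p] ∧ l[p] ≤ l.length :=
      fun p => (dset_mem hl' _).1 (List.getElem_mem _)
    let f : Fin l.length → Fin l.length := fun p => ⟨l[p.rev] - 1, by have := hb p.rev; omega⟩
    have hf : Function.Injective f := by
      intro p q h
      have h1 : l[p.rev] - 1 = l[q.rev] - 1 := congrArg Fin.val h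
      have h2 := hb p.rev
      have h3 := hb q.rev
      have h4 : l[p.rev] = l[q.rev] := by omega
      have h5 := (hnd.getElem_inj_iff).1 h4
      exact Fin.rev_injective (Fin.ext h5)
    let e : Equiv.Perm (Fin l.length) := Equiv.ofBijective f (Finite.injective_iff_bijective.1 hf)
    have hL : toL e.symm = l := by
      rw [toL]
      refine List.ext_getElem (by simp) fun i h1 h2 => ?_
      have h3 := hb ⟨i, h2⟩
      simp only [List.getElem_ofFn, Equiv.symm_symm]
      change l.get ((⟨i, h2⟩ : Fin l.length).rev.rev : Fin l.length) - 1 + 1 = l[i]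
      rw [Fin.rev_rev]
      exact Nat.sub_add_cancel h3.1
    refine ⟨e.symm, ?_, hL⟩
    have := (mem_dset.1 hl').2
    rw [← hL, toL_iff A hA] at this
    exact this

lemma aseq_eq (m : ℕ) : aseq (2 * m) = bb m := by
  rw [aseq, bb, cnt_nil]
  apply fsize_eq
  intro j h1 h2
  rw [evenA, if_pos (by simp), Finset.mem_filter, Finset.mem_Icc]
  constructor
  · exact fun h => h.2
  · intro h
    refine ⟨?_, h⟩
    obtain ⟨y, hy⟩ := h
    omega

/-- `a(2m) / (2+2√2)^m → √2/4` as `m → ∞`. -/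
theorem stmt16 :
    Filter.Tendsto
      (fun m : ℕ => (aseq (2*m) : ℝ) / (2 + 2 * Real.sqrt 2) ^ m)
      Filter.atTop (nhds (Real.sqrt 2 / 4)) := by
  simp only [aseq_eq]
  exact bb_limit
end

section
/- There exists a constant c > 0 such that for all n ≥ 5, f_n(B_n) ≥ c · (2 + 2√2)^{n/2}, where B_n = {2} ∪ {odd j : 3 ≤ j ≤ n−3} if n is even and B_n = {2} ∪ {odd j : 3 ≤ j ≤ n−2} if n is odd (the odd 1N33N1-alternating scheme). In other words, the odd 1N33N1-alternating scheme generates domains of size Ω((√(2+2√2))^n). -/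
/-- The odd 1N33N1-alternating scheme:
`B_n = {2} ∪ {odd j : 3 ≤ j ≤ n-3}` for even `n`,
`B_n = {2} ∪ {odd j : 3 ≤ j ≤ n-2}` for odd `n`. -/
def oddB (n : ℕ) : Finset ℕ :=
  if Even n then insert 2 ((Finset.Icc 3 (n-3)).filter (fun j => Odd j))
  else insert 2 ((Finset.Icc 3 (n-2)).filter (fun j => Odd j))

/-- Insert the new alternative `n` so that exactly `s` old ones are ranked below it. -/
def insRank (n s : ℕ) (r : ℕ → ℕ) : ℕ → ℕ :=
  fun x => if x = n then s else if r x < s then r x else r x + 1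

/-- `r` gives ranks, counted from the bottom, of an order in the domain on `0, …, n-1`. -/
def GoodRank (A : Finset ℕ) (n : ℕ) (r : ℕ → ℕ) : Prop :=
  (∀ x, x < n → r x < n) ∧ (∀ x y, x < n → y < n → r x = r y → x = y) ∧
  ∀ i j k, i < j → j < k → k < n →
    ((j + 1 ∈ A → ¬ (r i < r j ∧ r i < r k)) ∧ (j + 1 ∉ A → ¬ (r i < r k ∧ r j < r k)))

/-- All elements of `S` are admissible insertion heights for the next alternative. -/
def GoodPos (A : Finset ℕ) (n : ℕ) (r : ℕ → ℕ) (S : Finset ℕ) : Prop :=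
  0 ∈ S ∧ ∀ s ∈ S, s ≤ n ∧ ∀ i j, i < j → j < n →
    ((j + 1 ∈ A → r i < s → r j < r i) ∧ (j + 1 ∉ A → r i < s → s ≤ r j))

/-- The insertion heights after inserting at height `s`. -/
def nextPos (A : Finset ℕ) (n : ℕ) (S : Finset ℕ) (s : ℕ) : Finset ℕ :=
  if n + 1 ∈ A then (if s = 0 then insert 0 (S.image (· + 1)) else {0})
  else (if s = 0 then {0, 1} else S.filter (· ≤ s))

theorem goodRank_ins {A : Finset ℕ} {n : ℕ} {r : ℕ → ℕ} {S : Finset ℕ} {s : ℕ}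
    (hr : GoodRank A n r) (hS : GoodPos A n r S) (hs : s ∈ S) :
    GoodRank A (n + 1) (insRank n s r) := by
  obtain ⟨h1, h2, h3⟩ := hr
  obtain ⟨h0, hS⟩ := hS
  obtain ⟨hsn, hS⟩ := hS s hs
  refine ⟨?_, ?_, ?_⟩
  · intro x hx
    have := h1 x
    unfold insRank
    split_ifs <;> omega
  · intro x y hx hy
    have := h2 x y
    unfold insRank
    split_ifs <;> omega
  · intro i j k hij hjk hk
    have e1 := hS i j hij
    have e2 := h3 i j k hij hjk
    unfold insRank
    rw [if_neg (by omega : i ≠ n), if_neg (by omega : j ≠ n)]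
    by_cases hkn : k = n
    · rw [if_pos hkn]
      have e1 := e1 (by omega)
      constructor
      · intro hA
        have := e1.1 hA
        split_ifs <;> omega
      · intro hA
        have := e1.2 hA
        split_ifs <;> omega
    · rw [if_neg hkn]
      have e2 := e2 (by omega)
      constructor
      · intro hA
        have := e2.1 hA
        split_ifs <;> omega
      · intro hA
        have := e2.2 hA
        split_ifs <;> omega

theorem goodPos_next {A : Finset ℕ} {n : ℕ} {r : ℕ → ℕ} {S : Finset ℕ} {s : ℕ}
    (hS : GoodPos A n r S) (hs : s ∈ S) :
    GoodPos A (n + 1) (insRank n s r) (nextPos A n S s) := by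
  obtain ⟨h0, hS⟩ := hS
  unfold nextPos
  have triv : ∀ i j, i < j → j < n + 1 →
    ((j + 1 ∈ A → insRank n s r i < 0 → insRank n s r j < insRank n s r i) ∧
     (j + 1 ∉ A → insRank n s r i < 0 → 0 ≤ insRank n s r j)) := by
    intro i j _ _
    constructor <;> intros <;> omega
  split_ifs with hA hs0 hs0
  · refine ⟨by simp, ?_⟩
    intro t ht
    rw [Finset.mem_insert, Finset.mem_image] at ht
    rcases ht with rfl | ⟨t, ht, rfl⟩
    · exact ⟨by omega, triv⟩
    · obtain ⟨a, b⟩ := hS t ht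
      refine ⟨by omega, ?_⟩
      intro i j hij hj
      unfold insRank
      subst hs0
      by_cases hjn : j = n
      · subst hjn
        rw [if_neg (by omega : i ≠ j)]
        simp [hA]
      · have := b i j hij (by omega)
        rw [if_neg (by omega : i ≠ n), if_neg hjn]
        simpa using this
  · refine ⟨by simp, ?_⟩
    intro t ht
    rw [Finset.mem_singleton] at ht
    subst ht
    exact ⟨by omega, triv⟩
  · refine ⟨by simp, ?_⟩
    intro t ht
    rw [Finset.mem_insert, Finset.mem_singleton] at ht
    rcases ht with rfl | rfl
    · exact ⟨by omega, triv⟩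
    · refine ⟨by omega, ?_⟩
      intro i j hij hj
      unfold insRank
      subst hs0
      rw [if_neg (by omega : i ≠ n)]
      simp
  · refine ⟨by simp [h0], ?_⟩
    intro t ht
    rw [Finset.mem_filter] at ht
    obtain ⟨ht, hts⟩ := ht
    obtain ⟨a, b⟩ := hS t ht
    refine ⟨by omega, ?_⟩
    intro i j hij hj
    unfold insRank
    rw [if_neg (by omega : i ≠ n)]
    by_cases hjn : j = n
    · subst hjn
      simp only [hA, if_true]
      constructor
      · intro h
        exact absurd h (by simp)
      · intros
        omega
    · have := b i j hij (by omega)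
      rw [if_neg hjn]
      constructor
      · intro h
        have := this.1 h
        split_ifs <;> omega
      · intro h
        have := this.2 h
        split_ifs <;> omega

theorem sum_rank_filter (u : ℕ → ℝ) (S : Finset ℕ) :
    ∑ s ∈ S, u (S.filter (· ≤ s)).card = ∑ k ∈ Finset.range S.card, u (k + 1) := by
  induction S using Finset.induction_on_max with
  | empty => simp
  | insert a S ha ih =>
    have hna : a ∉ S := fun h => lt_irrefl _ (ha a h)
    rw [Finset.sum_insert hna, Finset.card_insert_of_notMem hna, Finset.sum_range_succ, ← ih,
      add_comm]
    congr 1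
    · apply Finset.sum_congr rfl
      intro s hs
      congr 2
      rw [Finset.filter_insert, if_neg (by have := ha s hs; omega)]
    · congr 1
      rw [Finset.filter_true_of_mem, Finset.card_insert_of_notMem hna]
      intro x hx
      rw [Finset.mem_insert] at hx
      rcases hx with rfl | hx
      · exact le_rfl
      · exact (ha x hx).le

/-- The transfer operator for one insertion. -/
noncomputable def transOp (A : Finset ℕ) (n : ℕ) (u : ℕ → ℝ) (k : ℕ) : ℝ :=
  if n + 1 ∈ A then u (k + 1) + ((k : ℝ) - 1) * u 1
  else (∑ x ∈ Finset.range k, u (x + 1)) - u 1 + u 2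

theorem sum_nextPos (A : Finset ℕ) (n : ℕ) (u : ℕ → ℝ) (S : Finset ℕ) (h0 : 0 ∈ S) :
    ∑ s ∈ S, u (nextPos A n S s).card = transOp A n u S.card := by
  unfold nextPos transOp
  by_cases hA : n + 1 ∈ A
  · simp only [hA, if_true]
    rw [← Finset.add_sum_erase S _ h0]
    congr 1
    · rw [if_pos rfl, Finset.card_insert_of_notMem (by simp),
        Finset.card_image_of_injective _ (add_left_injective 1)]
    · rw [Finset.sum_congr rfl (g := fun _ => u 1)]
      · rw [Finset.sum_const, Finset.card_erase_of_mem h0, nsmul_eq_mul,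
          Nat.cast_sub (Finset.card_pos.mpr ⟨0, h0⟩)]
        simp
      · intro s hs
        rw [if_neg (Finset.ne_of_mem_erase hs)]
        simp
  · simp only [hA, if_false]
    rw [← sum_rank_filter, ← Finset.add_sum_erase S _ h0, ← Finset.add_sum_erase S _ h0]
    have e : (S.filter (· ≤ 0)).card = 1 := by
      rw [Finset.card_eq_one]
      refine ⟨0, ?_⟩
      ext x
      simp only [Finset.mem_filter, Finset.mem_singleton]
      constructor
      · intro h
        omega
      · rintro rfl
        exact ⟨h0, le_rfl⟩
    rw [e, if_pos rfl]
    have e2 : ∑ s ∈ S.erase 0, u (if s = 0 then ({0, 1} : Finset ℕ) else S.filter (· ≤ s)).card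
        = ∑ s ∈ S.erase 0, u (S.filter (· ≤ s)).card := by
      apply Finset.sum_congr rfl
      intro s hs
      rw [if_neg (Finset.ne_of_mem_erase hs)]
    rw [e2]
    simp
    ring

/-- A family of distinct members of the domain on `n` alternatives with total weight `≥ v`. -/
def HasFam (A : Finset ℕ) (n : ℕ) (u : ℕ → ℝ) (v : ℝ) : Prop :=
  ∃ (ι : Type) (_ : Fintype ι) (r : ι → ℕ → ℕ) (S : ι → Finset ℕ),
    (∀ a b, (∀ x, x < n → r a x = r b x) → a = b) ∧
    (∀ a, GoodRank A n (r a)) ∧ (∀ a, GoodPos A n (r a) (S a)) ∧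
    v ≤ ∑ a, u (S a).card

theorem HasFam.step {A : Finset ℕ} {n : ℕ} {u : ℕ → ℝ} {v : ℝ}
    (h : HasFam A n (transOp A n u) v) : HasFam A (n + 1) u v := by
  obtain ⟨ι, _, r, S, hinj, hr, hS, hv⟩ := h
  refine ⟨Σ a, {s // s ∈ S a}, inferInstance, fun p => insRank n p.2.1 (r p.1),
    fun p => nextPos A n (S p.1) p.2.1, ?_, ?_, ?_, ?_⟩
  · rintro ⟨a, s, hs⟩ ⟨b, t, ht⟩ hab
    have hst : s = t := by
      have := hab n (by omega)
      simpa [insRank] using this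
    subst hst
    have : a = b := by
      apply hinj
      intro x hx
      have := hab x (by omega)
      simp only [insRank, if_neg (by omega : x ≠ n)] at this
      split_ifs at this <;> omega
    subst this
    rfl
  · rintro ⟨a, s, hs⟩
    exact goodRank_ins (hr a) (hS a) hs
  · rintro ⟨a, s, hs⟩
    exact goodPos_next (hS a) hs
  · rw [Fintype.sum_sigma]
    refine hv.trans (le_of_eq ?_)
    apply Finset.sum_congr rfl
    intro a _
    rw [← sum_nextPos A n u (S a) (hS a).1]
    exact (Finset.sum_coe_sort (S a) (fun s => u (nextPos A n (S a) s).card)).symm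

theorem HasFam.mono {A : Finset ℕ} {n : ℕ} {u w : ℕ → ℝ} {v : ℝ}
    (h : HasFam A n u v) (huw : ∀ k, 1 ≤ k → u k ≤ w k) : HasFam A n w v := by
  obtain ⟨ι, _, r, S, hinj, hr, hS, hv⟩ := h
  refine ⟨ι, inferInstance, r, S, hinj, hr, hS, hv.trans ?_⟩
  apply Finset.sum_le_sum
  intro a _
  exact huw _ (Finset.card_pos.mpr ⟨0, (hS a).1⟩)

theorem HasFam.start (A : Finset ℕ) (u : ℕ → ℝ) : HasFam A 1 u (u 2) := by
  refine ⟨Unit, inferInstance, fun _ _ => 0, fun _ => {0, 1}, ?_, ?_, ?_, ?_⟩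
  · intros
    rfl
  · intro _
    refine ⟨?_, ?_, ?_⟩ <;> intros <;> first | omega | simp
  · intro _
    refine ⟨by simp, ?_⟩
    intro s hs
    simp only [Finset.mem_insert, Finset.mem_singleton] at hs
    refine ⟨by omega, ?_⟩
    intros
    omega
  · simp

theorem HasFam.fsize_ge {A : Finset ℕ} {n : ℕ} {v : ℝ} (h : HasFam A n (fun _ => 1) v) :
    v ≤ (fsize n A : ℝ) := by
  obtain ⟨ι, _, r, S, hinj, hr, hS, hv⟩ := h
  simp only [Finset.sum_const, nsmul_eq_mul, mul_one, Finset.card_univ] at hv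
  refine hv.trans ?_
  norm_cast
  have key : ∀ a, ∃ σ : Equiv.Perm (Fin n), ∀ x : Fin n, ((σ x : Fin n) : ℕ) = n - 1 - r a x := by
    intro a
    obtain ⟨h1, h2, h3⟩ := hr a
    have hlt : ∀ x : Fin n, n - 1 - r a x < n := by
      intro x
      have := x.2
      omega
    have inj : Function.Injective (fun x : Fin n => (⟨n - 1 - r a x, hlt x⟩ : Fin n)) := by
      intro x y hxy
      simp only [Fin.mk.injEq] at hxy
      have hx := h1 x x.2
      have hy := h1 y y.2
      exact Fin.ext (h2 x y x.2 y.2 (by omega))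
    exact ⟨Equiv.ofBijective _ (Finite.injective_iff_bijective.mp inj), fun x => rfl⟩
  choose σ hσ using key
  have hσi : Function.Injective σ := by
    intro a b hab
    apply hinj
    intro x hx
    have e1 := hσ a ⟨x, hx⟩
    have e2 := hσ b ⟨x, hx⟩
    rw [hab] at e1
    have f1 := (hr a).1 x hx
    have f2 := (hr b).1 x hx
    simp only at e1 e2
    omega
  unfold fsize
  rw [← Nat.card_eq_fintype_card, ← Set.ncard_univ, ← Set.ncard_image_of_injective _ hσi]
  apply Set.ncard_le_ncard _ (Set.toFinite _)
  rintro _ ⟨a, _, rfl⟩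
  intro i j k hij hjk
  obtain ⟨h1, h2, h3⟩ := hr a
  have := h3 i j k hij hjk k.2
  have fi := h1 i i.2
  have fj := h1 j j.2
  have fk := h1 k k.2
  simp only [Fin.lt_def, hσ]
  constructor
  · intro hA
    have := this.1 hA
    omega
  · intro hA
    have := this.2 hA
    omega

/-- The growth rate for two consecutive steps. -/
noncomputable def lam : ℝ := 2 + 2 * Real.sqrt 2

/-- The main eigenfunction. -/
noncomputable def hfun (k : ℕ) : ℝ := Real.sqrt 2 ^ k - 1

/-- The auxiliary eigenfunction, with eigenvalue `9/2`. -/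
noncomputable def gfun (k : ℕ) : ℝ := 3 ^ k / 27 - 28 / 27 * (3 / 2) ^ k + 1

/-- The combined test function. -/
noncomputable def ufun (m : ℕ) (k : ℕ) : ℝ := (lam ^ m * hfun k / 10 - (9 / 2) ^ m * gfun k) / 2

theorem sum_pow_shift (q : ℝ) (k : ℕ) :
    (q - 1) * ∑ x ∈ Finset.range k, q ^ (x + 1) = q ^ (k + 1) - q := by
  induction k with
  | zero => simp
  | succ k ih =>
    rw [Finset.sum_range_succ, mul_add, ih]
    ring

theorem sum_h (k : ℕ) : ∑ x ∈ Finset.range k, hfun (x + 1)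
    = (Real.sqrt 2 + 1) * (Real.sqrt 2 ^ (k + 1) - Real.sqrt 2) - k := by
  have h2 : Real.sqrt 2 ^ 2 = 2 := Real.sq_sqrt (by norm_num)
  have := sum_pow_shift (Real.sqrt 2) k
  simp only [hfun, Finset.sum_sub_distrib, Finset.sum_const, Finset.card_range, nsmul_eq_mul,
    mul_one]
  rw [← this]
  linear_combination (-∑ x ∈ Finset.range k, Real.sqrt 2 ^ (x + 1)) * h2

theorem sum_g (k : ℕ) : ∑ x ∈ Finset.range k, gfun (x + 1)
    = (3 ^ (k + 1) - 3) / 54 - 28 / 27 * 2 * ((3 / 2) ^ (k + 1) - 3 / 2) + k := by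
  induction k with
  | zero => norm_num
  | succ k ih =>
    rw [Finset.sum_range_succ, ih]
    unfold gfun
    push_cast
    ring

theorem sum_u (m k : ℕ) : ∑ x ∈ Finset.range k, ufun m (x + 1)
    = (lam ^ m * (∑ x ∈ Finset.range k, hfun (x + 1)) / 10
      - (9 / 2) ^ m * ∑ x ∈ Finset.range k, gfun (x + 1)) / 2 := by
  induction k with
  | zero => simp
  | succ k ih =>
    rw [Finset.sum_range_succ, ih, Finset.sum_range_succ, Finset.sum_range_succ]
    unfold ufun
    ring

theorem pair_op {A : Finset ℕ} {n : ℕ} (h1 : n + 1 ∈ A) (h2 : n + 1 + 1 ∉ A) (m k : ℕ) :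
    transOp A n (transOp A (n + 1) (ufun m)) k = ufun (m + 1) k := by
  have hs : Real.sqrt 2 ^ 2 = 2 := Real.sq_sqrt (by norm_num)
  simp only [transOp, h1, h2, if_true, if_false, sum_u, sum_h, sum_g]
  have a1 : hfun 1 = Real.sqrt 2 - 1 := by simp [hfun]
  have a2 : hfun 2 = 1 := by rw [hfun, hs]; norm_num
  have b1 : gfun 1 = -4 / 9 := by norm_num [gfun]
  have b2 : gfun 2 = -1 := by norm_num [gfun]
  simp only [ufun, a1, a2, b1, b2, pow_succ (9 / 2 : ℝ) m, pow_succ lam m]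
  generalize lam ^ m = L
  generalize (9 / 2 : ℝ) ^ m = R
  simp only [hfun, gfun, lam]
  push_cast
  have e3 : Real.sqrt 2 ^ (k + 1 + 1) = 2 * Real.sqrt 2 ^ k := by
    rw [pow_succ, pow_succ, mul_assoc, ← sq, hs]
    ring
  rw [e3]
  generalize Real.sqrt 2 ^ k = q
  generalize Real.sqrt 2 = z at *
  linear_combination (L / 20 * (-1 + (k - 1) * z)) * hs

theorem ufun_zero_le (k : ℕ) (hk : 1 ≤ k) : ufun 0 k ≤ 1 := by
  have hs2 : Real.sqrt 2 ≤ 3 / 2 := Real.sqrt_le_iff.mpr ⟨by norm_num, by norm_num⟩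
  have hp : Real.sqrt 2 ^ k ≤ (3 / 2) ^ k := pow_le_pow_left₀ (Real.sqrt_nonneg 2) hs2 k
  have key : 307 / 270 * (3 / 2 : ℝ) ^ k - 3 ^ k / 27 ≤ 31 / 10 := by
    by_cases h5 : 5 ≤ k
    · have e : (3 : ℝ) ^ k = 2 ^ k * (3 / 2) ^ k := by
        rw [← mul_pow]
        norm_num
      have h32 : (2 : ℝ) ^ 5 ≤ 2 ^ k := pow_le_pow_right₀ (by norm_num) h5
      have hy : (0 : ℝ) < (3 / 2) ^ k := by positivity
      rw [e]
      nlinarith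
    · have : k < 5 := by omega
      interval_cases k <;> norm_num
  simp only [ufun, hfun, gfun, pow_zero]
  linarith

theorem oddB_pair {n j : ℕ} (hj : 1 ≤ j) (hn : 2 * j + 3 ≤ n) :
    2 * j + 1 ∈ oddB n ∧ 2 * j + 2 ∉ oddB n := by
  unfold oddB
  split_ifs with h
  · simp only [Finset.mem_insert, Finset.mem_filter, Finset.mem_Icc, Nat.odd_iff]
    rw [Nat.even_iff] at h
    omega
  · simp only [Finset.mem_insert, Finset.mem_filter, Finset.mem_Icc, Nat.odd_iff]
    rw [Nat.not_even_iff] at h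
    omega

theorem oddB_end {n j : ℕ} (hj : n ≤ j + 1) (hn : 5 ≤ n) : j ∉ oddB n := by
  unfold oddB
  split_ifs with h <;>
  simp only [Finset.mem_insert, Finset.mem_filter, Finset.mem_Icc, Nat.odd_iff] <;> omega

theorem oddB_two (n : ℕ) : 2 ∈ oddB n := by
  unfold oddB
  split_ifs <;> simp

theorem fam_one_step {A : Finset ℕ} {n : ℕ} {v : ℝ} (h : HasFam A n (fun _ => 1) v) :
    HasFam A (n + 1) (fun _ => 1) v := by
  apply HasFam.step
  apply h.mono
  intro k hk
  have : (1 : ℝ) ≤ k := by exact_mod_cast hk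
  unfold transOp
  split_ifs
  · linarith
  · simpa using this

theorem fam_pairs {n m : ℕ} (hn : 2 * m + 3 ≤ n) :
    ∀ t, t ≤ m → HasFam (oddB n) (2 * t + 2) (ufun (m - t)) (ufun m 1 + ufun m 3) := by
  intro t
  induction t with
  | zero =>
    intro _
    apply HasFam.step
    have := HasFam.start (oddB n) (transOp (oddB n) 1 (ufun m))
    have e : transOp (oddB n) 1 (ufun m) 2 = ufun m 1 + ufun m 3 := by
      have h2 : 1 + 1 ∈ oddB n := oddB_two n
      rw [transOp, if_pos h2]
      push_cast
      ring
    rw [e] at this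
    exact this
  | succ t ih =>
    intro ht
    have := ih (by omega)
    have e : m - t = (m - (t + 1)) + 1 := by omega
    obtain ⟨p1, p2⟩ := oddB_pair (n := n) (j := t + 1) (by omega) (by omega)
    apply HasFam.step
    apply HasFam.step
    refine this.mono ?_
    intro k _
    rw [pair_op (n := 2 * (t + 1)) p1 p2, e]

theorem fsize_lower {n m : ℕ} (hn : 2 * m + 3 ≤ n) (hn' : n ≤ 2 * m + 4) :
    lam ^ m / 20 ≤ (fsize n (oddB n) : ℝ) := by
  have hf := fam_pairs hn m le_rfl
  rw [Nat.sub_self] at hf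
  have hf1 := fam_one_step (hf.mono (w := fun _ => 1) ufun_zero_le)
  have hf2 : HasFam (oddB n) n (fun _ => 1) (ufun m 1 + ufun m 3) := by
    rcases (by omega : n = 2 * m + 3 ∨ n = 2 * m + 4) with h | h
    · convert hf1 using 1
    · have := fam_one_step hf1
      convert this using 1
  refine le_trans ?_ hf2.fsize_ge
  have hs : Real.sqrt 2 ^ 2 = 2 := Real.sq_sqrt (by norm_num)
  have hs1 : (7 : ℝ) / 5 ≤ Real.sqrt 2 := Real.le_sqrt_of_sq_le (by norm_num)
  have hL : 0 < lam ^ m := by unfold lam; positivity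
  have hR : (0 : ℝ) < (9 / 2) ^ m := by positivity
  have a1 : hfun 1 = Real.sqrt 2 - 1 := by simp [hfun]
  have a3 : hfun 3 = 2 * Real.sqrt 2 - 1 := by rw [hfun, pow_succ, hs]
  have b1 : gfun 1 = -4 / 9 := by norm_num [gfun]
  have b3 : gfun 3 = -3 / 2 := by norm_num [gfun]
  simp only [ufun, a1, a3, b1, b3]
  nlinarith

/-- there is `c > 0` with `f_n(B_n) ≥ c·(2+2√2)^{n/2}` for all
`n ≥ 5`; i.e. the odd scheme generates domains of size `Ω((√(2+2√2))^n)`. -/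
theorem stmt19 :
    ∃ c : ℝ, 0 < c ∧ ∀ n : ℕ, 5 ≤ n →
      c * (2 + 2 * Real.sqrt 2) ^ ((n : ℝ) / 2) ≤ (fsize n (oddB n) : ℝ) := by
  have hs0 : 0 ≤ Real.sqrt 2 := Real.sqrt_nonneg 2
  have hl : 1 ≤ lam := by unfold lam; linarith
  refine ⟨1 / (20 * lam ^ 2), by positivity, ?_⟩
  intro n hn
  have h := fsize_lower (n := n) (m := (n - 3) / 2) (by omega) (by omega)
  refine le_trans ?_ h
  have e : (2 + 2 * Real.sqrt 2) ^ ((n : ℝ) / 2) ≤ lam ^ ((n - 3) / 2 + 2) := by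
    rw [← Real.rpow_natCast]
    apply Real.rpow_le_rpow_of_exponent_le hl
    have : n ≤ 2 * ((n - 3) / 2 + 2) := by omega
    have : (n : ℝ) ≤ 2 * (((n - 3) / 2 + 2 : ℕ) : ℝ) := by exact_mod_cast this
    linarith
  calc 1 / (20 * lam ^ 2) * (2 + 2 * Real.sqrt 2) ^ ((n : ℝ) / 2)
      ≤ 1 / (20 * lam ^ 2) * lam ^ ((n - 3) / 2 + 2) := by gcongr
    _ = lam ^ ((n - 3) / 2) / 20 := by
      rw [pow_add]
      field_simp
end
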